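/- arXiv:2207.10161 — 2 statements merged into one kernel-verified Lean document; each statement's English description precedes it below -/
import Mathlib

section
/- Let 1 < α < 2 and let (a,b) ∈ [−1,1) × [−1,1). If h(a,b,α) = 0 and −(2−α)(1−a²)·∂_a h(a,b,α) + (α·a² + 2(b−2)·a + 2 − α)·∂_b h(a,b,α) = 0, where ∂_a h(a,b,α) = α·b·(2a+b) − 4b + 2 − α and ∂_b h(a,b,α) = α·a·(a+2b) − 4a + 2 − α, then (a,b) = (0,0). (This is the key algebraic step showing that along the degeneracy curve E_α the third directional derivative of w_α in the degenerate direction vanishes only at the points corresponding to (±π/2, ±π/2).) -/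
/-!
Write `s = a + b` and `p = a * b`. The equation `h = 0` reads `(2 - α) s (1 - p) = 2 p (2 - s)`, so
`α` can be eliminated on the degeneracy curve after multiplication by `s (1 - p)`. The directional
derivative of `h` then becomes `4 a s (2 - s)` times a sum of two terms that are nonnegative on the
closed square `[-1, 1]²` and vanish together only if `p = 0` or `p = 1`. On the curve, these two
cases force `s = 0` and `s = 2` respectively.
-/

section Elimination

variable {R : Type*} [CommRing R] {α a b : R}

/-- The polynomial `h(a, b, α)`, the essential factor of `det D²w_α` in the variables
`a = cos ξ₁`, `b = cos ξ₂`. -/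
def degeneracyFactor (α a b : R) : R :=
  α * a * b * (a + b) - 4 * (a * b) + (2 - α) * (a + b)

/-- The partial derivative `∂_a h(a, b, α)`. As `h` is symmetric in `a` and `b`, the other partial
derivative `∂_b h(a, b, α)` is encoded as `degeneracyFactorDeriv α b a`. -/
def degeneracyFactorDeriv (α a b : R) : R :=
  α * b * (2 * a + b) - 4 * b + 2 - α

/-- The derivative of `h` along the kernel of `D²w_α`, written in the variables `a = cos ξ₁`,
`b = cos ξ₂`. The kernel vector is `(-∂₁₂w_α, ∂₁₁w_α)`; a constant, a power of `w_α` and the factor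
`sin ξ₂` are divided out. -/
def degenerateDirDeriv (α a b : R) : R :=
  -(2 - α) * (1 - a ^ 2) * degeneracyFactorDeriv α a b
    + (α * a ^ 2 + 2 * (b - 2) * a + 2 - α) * degeneracyFactorDeriv α b a

/-- The factor of `degenerateDirDeriv` on the degeneracy curve that is left when `α` is eliminated
and the factors `a`, `a + b` and `2 - (a + b)` are split off, written as a sum of two terms that are
nonnegative on `[-1, 1]²`. -/
def degenerateDirEliminant (a b : R) : R :=
  (1 - a) * (1 - b) * (b ^ 2 * (1 - a ^ 2) + a ^ 2 * (1 - b ^ 2)) + (1 - a * b) * (a - b) ^ 2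

theorem degeneracyFactor_comm (α a b : R) : degeneracyFactor α a b = degeneracyFactor α b a := by
  unfold degeneracyFactor
  ring

theorem degeneracyFactor_eq_zero_iff :
    degeneracyFactor α a b = 0 ↔
      (2 - α) * ((a + b) * (1 - a * b)) = 2 * (a * b) * (2 - (a + b)) := by
  unfold degeneracyFactor
  constructor <;> intro h <;> linear_combination h

theorem mul_degeneracyFactorDeriv (h : degeneracyFactor α a b = 0) :
    (a + b) * (1 - a * b) * degeneracyFactorDeriv α a b =
      2 * b * ((a + b) ^ 2 - 2 * b * (1 + a ^ 2)) := by
  rw [degeneracyFactor_eq_zero_iff] at h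
  unfold degeneracyFactorDeriv
  linear_combination (1 - b * (2 * a + b)) * h

theorem mul_degenerateDirDeriv (h : degeneracyFactor α a b = 0) :
    ((a + b) * (1 - a * b)) ^ 2 * degenerateDirDeriv α a b =
      4 * a * (a + b) * (2 - (a + b)) * degenerateDirEliminant a b := by
  have elim := degeneracyFactor_eq_zero_iff.mp h
  have fst_dir : (a + b) * (1 - a * b) * (-(2 - α) * (1 - a ^ 2)) =
      -(2 * (a * b) * (2 - (a + b)) * (1 - a ^ 2)) := by
    linear_combination -(1 - a ^ 2) * elim
  have snd_dir : (a + b) * (1 - a * b) * (α * a ^ 2 + 2 * (b - 2) * a + 2 - α) =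
      -(2 * a ^ 2 * (2 - (a + b)) * (1 - b ^ 2)) := by
    linear_combination (1 - a ^ 2) * elim
  have deriv_fst := mul_degeneracyFactorDeriv h
  have deriv_snd := mul_degeneracyFactorDeriv (degeneracyFactor_comm α a b ▸ h)
  calc ((a + b) * (1 - a * b)) ^ 2 * degenerateDirDeriv α a b
      = (a + b) * (1 - a * b) * (-(2 - α) * (1 - a ^ 2)) *
            ((a + b) * (1 - a * b) * degeneracyFactorDeriv α a b)
          + (a + b) * (1 - a * b) * (α * a ^ 2 + 2 * (b - 2) * a + 2 - α) *
            ((b + a) * (1 - b * a) * degeneracyFactorDeriv α b a) := by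
        unfold degenerateDirDeriv
        ring
    _ = 4 * a * (a + b) * (2 - (a + b)) * degenerateDirEliminant a b := by
        rw [fst_dir, deriv_fst, snd_dir, deriv_snd, degenerateDirEliminant]
        ring

end Elimination

section Square

variable {R : Type*} [CommRing R] [LinearOrder R] [IsStrictOrderedRing R] {α a b : R}

theorem mul_le_one_of_mem_Icc_neg_one_one (ha : a ∈ Set.Icc (-1) 1) (hb : b ∈ Set.Icc (-1) 1) :
    a * b ≤ 1 := by
  have hab : |a * b| ≤ 1 := by
    rw [abs_mul]
    exact mul_le_one₀ (abs_le.mpr ha) (abs_nonneg b) (abs_le.mpr hb)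
  exact (le_abs_self _).trans hab

theorem degenerateDirEliminant_pos (ha : a ∈ Set.Icc (-1) 1) (hb : b ∈ Set.Icc (-1) 1)
    (h0 : a * b ≠ 0) (h1 : a * b ≠ 1) : 0 < degenerateDirEliminant a b := by
  have ha_sq : 0 ≤ 1 - a ^ 2 := sub_nonneg.mpr ((sq_le_one_iff_abs_le_one a).mpr (abs_le.mpr ha))
  have hb_sq : 0 ≤ 1 - b ^ 2 := sub_nonneg.mpr ((sq_le_one_iff_abs_le_one b).mpr (abs_le.mpr hb))
  have ha_le : 0 ≤ 1 - a := sub_nonneg.mpr ha.2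
  have hb_le : 0 ≤ 1 - b := sub_nonneg.mpr hb.2
  have hab : 0 < 1 - a * b :=
    sub_pos.mpr ((mul_le_one_of_mem_Icc_neg_one_one ha hb).lt_of_ne h1)
  unfold degenerateDirEliminant
  obtain rfl | hne := eq_or_ne a b
  · have ha0 : a ≠ 0 := left_ne_zero_of_mul h0
    have ha1 : 1 - a ≠ 0 := sub_ne_zero.mpr fun h => h1 (by rw [← h, one_mul])
    rw [← sq] at hab
    rw [sub_self, zero_pow two_ne_zero, mul_zero, add_zero]
    positivity
  · have hsq : 0 < (a - b) ^ 2 := sq_pos_of_ne_zero (sub_ne_zero.mpr hne)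
    exact add_pos_of_nonneg_of_pos (by positivity) (mul_pos hab hsq)

theorem stmt7_general (hα : α ≠ 2) (ha : a ∈ Set.Icc (-1) 1) (hb : b ∈ Set.Icc (-1) 1) :
    degeneracyFactor α a b = 0 ∧ degenerateDirDeriv α a b = 0 ↔
      a = 0 ∧ b = 0 ∨ a = 1 ∧ b = 1 := by
  constructor
  · rintro ⟨hcurve, hdir⟩
    have elim := degeneracyFactor_eq_zero_iff.mp hcurve
    obtain hp | hp := eq_or_ne (a * b) 0
    · have hs : a + b = 0 := by simpa [hp, sub_eq_zero, hα.symm] using elim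
      obtain rfl | rfl := mul_eq_zero.mp hp
      · exact Or.inl ⟨rfl, by rwa [zero_add] at hs⟩
      · exact Or.inl ⟨by rwa [add_zero] at hs, rfl⟩
    obtain hs | hs := eq_or_ne (2 - (a + b)) 0
    · exact Or.inr ⟨by linarith [ha.2, hb.2], by linarith [ha.2, hb.2]⟩
    have hprod : (a + b) * (1 - a * b) ≠ 0 :=
      right_ne_zero_of_mul (elim ▸ mul_ne_zero (mul_ne_zero two_ne_zero hp) hs)
    have hfactor : 4 * a * (a + b) * (2 - (a + b)) ≠ 0 :=
      mul_ne_zero (mul_ne_zero (mul_ne_zero four_ne_zero (left_ne_zero_of_mul hp))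
        (left_ne_zero_of_mul hprod)) hs
    have heliminant : degenerateDirEliminant a b = 0 := by
      have hmul := mul_degenerateDirDeriv hcurve
      rw [hdir, mul_zero] at hmul
      exact (mul_eq_zero.mp hmul.symm).resolve_left hfactor
    have hp1 : a * b ≠ 1 := (sub_ne_zero.mp (right_ne_zero_of_mul hprod)).symm
    exact absurd heliminant (degenerateDirEliminant_pos ha hb hp hp1).ne'
  · rintro (⟨rfl, rfl⟩ | ⟨rfl, rfl⟩) <;>
      simp only [degeneracyFactor, degenerateDirDeriv, degeneracyFactorDeriv] <;>
      constructor <;> ring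

end Square

/-- For `1 < α < 2` and `(a,b) ∈ [−1,1)²`, if `h(a,b,α) = 0` and
`−(2−α)(1−a²)·∂_a h + (α·a² + 2(b−2)a + 2 − α)·∂_b h = 0` (with the explicit formulas
for the partial derivatives of `h`), then `(a,b) = (0,0)`. -/
theorem stmt7 (α : ℝ) (hα1 : 1 < α) (hα2 : α < 2)
    (h : ℝ → ℝ → ℝ)
    (hh : ∀ a b, h a b = α * a * b * (a + b) - 4 * (a * b) + (2 - α) * (a + b))
    (a b : ℝ) (ha : a ∈ Set.Ico (-1 : ℝ) 1) (hb : b ∈ Set.Ico (-1 : ℝ) 1)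
    (hzero : h a b = 0)
    (hdeg : -(2 - α) * (1 - a ^ 2) * (α * b * (2 * a + b) - 4 * b + 2 - α)
        + (α * a ^ 2 + 2 * (b - 2) * a + 2 - α) * (α * a * (a + 2 * b) - 4 * a + 2 - α)
        = 0) :
    a = 0 ∧ b = 0 := by
  rw [add_comm a (2 * b)] at hdeg
  exact ((stmt7_general hα2.ne (Set.Ico_subset_Icc_self ha) (Set.Ico_subset_Icc_self hb)).mp
    ⟨(hh a b).symm.trans hzero, hdeg⟩).resolve_right fun hone => ha.2.ne hone.1
end

section
/- Let d ≥ 1 be an integer, 1 < α < 2, and let ζ : ℝ^d → ℂ be smooth and compactly supported with s(ξ) > 0 for every ξ in the support of ζ. Let m > 0. Then for every n ∈ ℕ there exists a constant C = C(n, m, ζ, α, d) > 0 such that for every v ∈ ℝ^d satisfying ‖v − ∇w_α(ξ)‖ ≥ m for all ξ in the support of ζ, and every real τ ≠ 0, one has |∫_{ℝ^d} e^{iτ(v·ξ − w_α(ξ))} ζ(ξ) dξ| ≤ C·|τ|^{−n}. -/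
open Real MeasureTheory

/-!
On the support of `ζ` the phase `φ = ⟨v, ·⟩ - w` has gradient `v - ∇w ≠ 0`, so the field
`X = (v - ∇w) / ‖v - ∇w‖²` satisfies `X · ∇φ = 1`, and one integration by parts along `X` trades
a factor `iτ` of the integral for the operator `a ↦ X · ∇a + (div X) a` acting on the amplitude.

The bounds are uniform in the unbounded parameter `v` because `X` is the inversion of `v - ∇w` in
the unit sphere, and the derivative of the inversion is a polynomial in the image point. Hence an
amplitude `P (ξ, X ξ)` is sent to `(T P) (ξ, X ξ)` with `T P` independent of `v`, while `‖X‖ ≤ 1/m`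
keeps `(ξ, X ξ)` in a fixed compact set.
-/

open scoped Gradient InnerProductSpace

section Support

variable {E F : Type*} [NormedAddCommGroup E] [NormedSpace ℝ E] [NormedAddCommGroup F]
  [NormedSpace ℝ F]

theorem contDiff_of_forall_mem_tsupport {n : WithTop ℕ∞} {f : E → F}
    (hf : ∀ x ∈ tsupport f, ContDiffAt ℝ n f x) : ContDiff ℝ n f := by
  refine contDiff_iff_contDiffAt.2 fun x => ?_
  by_cases hx : x ∈ tsupport f
  · exact hf x hx
  · exact contDiffAt_const.congr_of_eventuallyEq (notMem_tsupport_iff_eventuallyEq.1 hx)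

/-- The first-order operator `a ↦ X · ∇a + g a`. -/
noncomputable def transportOperator (X : E → E) (g : E → ℝ) (a : E → F) (x : E) : F :=
  fderiv ℝ a x (X x) + g x • a x

theorem tsupport_transportOperator_subset (X : E → E) (g : E → ℝ) (a : E → F) :
    tsupport (transportOperator X g a) ⊆ tsupport a := by
  refine closure_minimal (fun x hx => ?_) (isClosed_tsupport a)
  contrapose! hx
  simp [transportOperator, fderiv_of_notMem_tsupport ℝ hx, image_eq_zero_of_notMem_tsupport hx]

theorem contDiff_transportOperator {n : WithTop ℕ∞} {X : E → E} {g : E → ℝ} {a : E → F}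
    (ha : ContDiff ℝ (n + 1) a) (hX : ∀ x ∈ tsupport a, ContDiffAt ℝ n X x)
    (hg : ∀ x ∈ tsupport a, ContDiffAt ℝ n g x) : ContDiff ℝ n (transportOperator X g a) := by
  refine contDiff_of_forall_mem_tsupport fun x hx => ?_
  have hxa := tsupport_transportOperator_subset X g a hx
  exact ((ha.fderiv_right le_rfl).contDiffAt.clm_apply (hX x hxa)).add
    ((hg x hxa).smul (ha.of_le le_self_add).contDiffAt)

end Support

section IntegrationByParts

theorem integrable_smul_of_hasCompactSupport {E F : Type*} [TopologicalSpace E] [MeasurableSpace E]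
    [OpensMeasurableSpace E] [NormedAddCommGroup F] [NormedSpace ℝ F] {μ : Measure E}
    [IsFiniteMeasureOnCompacts μ] {g : E → ℝ} {f : E → F} (hf : Continuous f)
    (hfc : HasCompactSupport f) (hg : ∀ x ∈ tsupport f, ContinuousAt g x) :
    Integrable (fun x => g x • f x) μ := by
  refine Continuous.integrable_of_hasCompactSupport (continuous_of_tsupport fun x hx => ?_)
    hfc.smul_left
  exact (hg x (tsupport_smul_subset_right g f hx)).smul hf.continuousAt

variable {E F : Type*} [NormedAddCommGroup E] [NormedSpace ℝ E] [MeasurableSpace E] [BorelSpace E]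
  [NormedAddCommGroup F] [NormedSpace ℝ F] (μ : Measure E) {f : E → ℝ} {a : E → F}

theorem integrable_smul_fderiv_apply [IsFiniteMeasureOnCompacts μ] (ha : ContDiff ℝ 1 a)
    (hac : HasCompactSupport a) (hf : ∀ x ∈ tsupport a, ContinuousAt f x) (e : E) :
    Integrable (fun x => f x • fderiv ℝ a x e) μ :=
  integrable_smul_of_hasCompactSupport
    ((ha.continuous_fderiv one_ne_zero).clm_apply continuous_const) (hac.fderiv_apply ℝ e)
    fun x hx => hf x (tsupport_fderiv_apply_subset ℝ e hx)

theorem integrable_fderiv_apply_smul [IsFiniteMeasureOnCompacts μ] (ha : Continuous a)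
    (hac : HasCompactSupport a) (hf : ∀ x ∈ tsupport a, ContDiffAt ℝ 1 f x) (e : E) :
    Integrable (fun x => fderiv ℝ f x e • a x) μ :=
  integrable_smul_of_hasCompactSupport ha hac fun x hx =>
    ((hf x hx).continuousAt_fderiv one_ne_zero).clm_apply continuousAt_const

theorem integral_smul_fderiv_add_fderiv_smul_eq_zero [FiniteDimensional ℝ E]
    [μ.IsAddHaarMeasure] (ha : ContDiff ℝ 1 a) (hac : HasCompactSupport a)
    (hf : ∀ x ∈ tsupport a, ContDiffAt ℝ 1 f x) (e : E) :
    ∫ x, (f x • fderiv ℝ a x e + fderiv ℝ f x e • a x) ∂μ = 0 := by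
  have hf_cont x (hx : x ∈ tsupport a) : ContinuousAt f x := (hf x hx).continuousAt
  have integrable_left := integrable_smul_fderiv_apply μ ha hac hf_cont e
  have integrable_right := integrable_fderiv_apply_smul μ ha.continuous hac hf e
  rw [integral_add integrable_left integrable_right, add_eq_zero_iff_eq_neg]
  exact integral_smul_fderiv_eq_neg_fderiv_smul_of_integrable integrable_right integrable_left
    (integrable_smul_of_hasCompactSupport ha.continuous hac hf_cont)
    (fun x hx => (hf x hx).differentiableAt one_ne_zero)
    fun x _ => ha.differentiable one_ne_zero x

end IntegrationByParts

section Divergence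

variable {E F : Type*} [NormedAddCommGroup E] [NormedSpace ℝ E] [NormedAddCommGroup F]
  [NormedSpace ℝ F]

/-- The divergence of a vector field, as the trace of its derivative. -/
noncomputable def divergence (X : E → E) (x : E) : ℝ :=
  LinearMap.trace ℝ E (fderiv ℝ X x)

variable [FiniteDimensional ℝ E]

theorem contDiff_trace {n : WithTop ℕ∞} :
    ContDiff ℝ n fun T : E →L[ℝ] E => LinearMap.trace ℝ E T :=
  (LinearMap.trace ℝ E ∘ₗ ContinuousLinearMap.coeLM ℝ).toContinuousLinearMap.contDiff

theorem divergence_eq_sum_fderiv_coord {ι : Type*} [Fintype ι] (b : Module.Basis ι ℝ E)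
    {X : E → E} {x : E} (hX : DifferentiableAt ℝ X x) :
    divergence X x = ∑ i, fderiv ℝ (fun y => b.coord i (X y)) x (b i) := by
  classical
  have coord_fderiv (i : ι) :
      b.repr (fderiv ℝ X x (b i)) i = fderiv ℝ (fun y => b.coord i (X y)) x (b i) := by
    have comp_fderiv :=
      ((b.coord i).toContinuousLinearMap.hasFDerivAt.comp x hX.hasFDerivAt).fderiv
    exact congr($comp_fderiv.symm (b i))
  simp only [divergence, LinearMap.trace_eq_matrix_trace ℝ b, Matrix.trace, Matrix.diag_apply,
    LinearMap.toMatrix_apply, ContinuousLinearMap.coe_coe, coord_fderiv]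

theorem transportOperator_divergence_eq_sum {ι : Type*} [Fintype ι] (b : Module.Basis ι ℝ E)
    {X : E → E} {a : E → F} {x : E} (hX : x ∈ tsupport a → DifferentiableAt ℝ X x) :
    transportOperator X (divergence X) a x = ∑ i, (b.coord i (X x) • fderiv ℝ a x (b i) +
      fderiv ℝ (fun y => b.coord i (X y)) x (b i) • a x) := by
  have fderiv_apply : fderiv ℝ a x (X x) = ∑ i, b.coord i (X x) • fderiv ℝ a x (b i) := by
    conv_lhs => rw [← b.sum_repr (X x), map_sum]
    simp only [map_smul, Module.Basis.coord_apply]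
  rw [transportOperator, fderiv_apply, Finset.sum_add_distrib, ← Finset.sum_smul]
  by_cases hx : x ∈ tsupport a
  · rw [divergence_eq_sum_fderiv_coord b (hX hx)]
  · simp only [image_eq_zero_of_notMem_tsupport hx, smul_zero]

variable [MeasurableSpace E] [BorelSpace E] (μ : Measure E) [μ.IsAddHaarMeasure]

theorem integral_transportOperator_divergence_eq_zero {a : E → F} (ha : ContDiff ℝ 1 a)
    (hac : HasCompactSupport a) {X : E → E} (hX : ∀ x ∈ tsupport a, ContDiffAt ℝ 1 X x) :
    ∫ x, transportOperator X (divergence X) a x ∂μ = 0 := by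
  let b := Module.finBasis ℝ E
  have hf i x (hx : x ∈ tsupport a) : ContDiffAt ℝ 1 (fun y => b.coord i (X y)) x :=
    (b.coord i).toContinuousLinearMap.contDiff.contDiffAt.comp x (hX x hx)
  simp only [fun x => transportOperator_divergence_eq_sum b fun hx : x ∈ tsupport a =>
    (hX x hx).differentiableAt one_ne_zero]
  refine (integral_finsetSum _ fun i _ => ?_).trans (Finset.sum_eq_zero fun i _ => ?_)
  · exact (integrable_smul_fderiv_apply μ ha hac (fun x hx => (hf i x hx).continuousAt) _).add
      (integrable_fderiv_apply_smul μ ha.continuous hac (hf i) _)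
  · exact integral_smul_fderiv_add_fderiv_smul_eq_zero μ ha hac (hf i) _

end Divergence

section Oscillation

/-- The factor `exp (iτφ)` of an oscillatory integral with phase `φ` and frequency `τ`. -/
noncomputable def oscillatoryFactor {E : Type*} (φ : E → ℝ) (τ : ℝ) (x : E) : ℂ :=
  Complex.exp (Complex.I * τ * φ x)

theorem norm_oscillatoryFactor {E : Type*} (φ : E → ℝ) (τ : ℝ) (x : E) :
    ‖oscillatoryFactor φ τ x‖ = 1 := by
  rw [oscillatoryFactor, mul_assoc, ← Complex.ofReal_mul, Complex.norm_exp_I_mul_ofReal]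

variable {E F : Type*} [NormedAddCommGroup E] [NormedSpace ℝ E] [NormedAddCommGroup F]
  [NormedSpace ℂ F] {φ : E → ℝ} {x : E}

theorem contDiffAt_oscillatoryFactor {n : WithTop ℕ∞} (hφ : ContDiffAt ℝ n φ x) (τ : ℝ) :
    ContDiffAt ℝ n (oscillatoryFactor φ τ) x :=
  (contDiffAt_const.mul (Complex.ofRealCLM.contDiff.contDiffAt.comp x hφ)).cexp

theorem fderiv_oscillatoryFactor_apply (hφ : DifferentiableAt ℝ φ x) (τ : ℝ) (e : E) :
    fderiv ℝ (oscillatoryFactor φ τ) x e =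
      Complex.I * τ * fderiv ℝ φ x e * oscillatoryFactor φ τ x := by
  have h : HasFDerivAt (oscillatoryFactor φ τ) _ x :=
    ((Complex.ofRealCLM.hasFDerivAt.comp x hφ.hasFDerivAt).const_mul (Complex.I * τ)).cexp
  rw [h.fderiv]
  simp only [oscillatoryFactor, Function.comp_apply, smul_apply,
    ContinuousLinearMap.comp_apply, Complex.ofRealCLM_apply, smul_eq_mul]
  ring

theorem contDiff_oscillatoryFactor_smul {n : WithTop ℕ∞} {a : E → F} (ha : ContDiff ℝ n a)
    (hφ : ∀ x ∈ tsupport a, ContDiffAt ℝ n φ x) (τ : ℝ) :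
    ContDiff ℝ n fun x => oscillatoryFactor φ τ x • a x :=
  contDiff_of_forall_mem_tsupport fun x hx =>
    (contDiffAt_oscillatoryFactor (hφ x (tsupport_smul_subset_right _ a hx)) τ).smul ha.contDiffAt

theorem transportOperator_oscillatoryFactor_smul {a : E → F} (ha : Differentiable ℝ a)
    (hφ : ∀ x ∈ tsupport a, DifferentiableAt ℝ φ x) {X : E → E}
    (hφX : ∀ x ∈ tsupport a, fderiv ℝ φ x (X x) = 1) (g : E → ℝ) (τ : ℝ) (x : E) :
    transportOperator X g (fun y => oscillatoryFactor φ τ y • a y) x =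
      (Complex.I * τ) • oscillatoryFactor φ τ x • a x +
        oscillatoryFactor φ τ x • transportOperator X g a x := by
  by_cases hx : x ∈ tsupport a
  · have differentiableAt_factor : DifferentiableAt ℝ (oscillatoryFactor φ τ) x :=
      ((Complex.ofRealCLM.differentiableAt.comp x (hφ x hx)).const_mul (Complex.I * τ)).cexp
    rw [transportOperator, transportOperator, fderiv_fun_smul differentiableAt_factor (ha x)]
    simp only [add_apply, smul_apply, ContinuousLinearMap.smulRight_apply,
      fderiv_oscillatoryFactor_apply (hφ x hx), hφX x hx, Complex.ofReal_one, mul_one, smul_add,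
      mul_smul, smul_comm (g x)]
    abel
  · have hx' : x ∉ tsupport fun y => oscillatoryFactor φ τ y • a y :=
      fun h => hx (tsupport_smul_subset_right _ a h)
    simp [transportOperator, fderiv_of_notMem_tsupport ℝ hx, fderiv_of_notMem_tsupport ℝ hx',
      image_eq_zero_of_notMem_tsupport hx]

variable [FiniteDimensional ℝ E] [MeasurableSpace E] [BorelSpace E] (μ : Measure E)
  [μ.IsAddHaarMeasure]

theorem smul_integral_oscillatoryFactor_smul {a : E → F} (ha : ContDiff ℝ 1 a)
    (hac : HasCompactSupport a) (hφ : ∀ x ∈ tsupport a, ContDiffAt ℝ 1 φ x) {X : E → E}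
    (hX : ∀ x ∈ tsupport a, ContDiffAt ℝ 1 X x) (hφX : ∀ x ∈ tsupport a, fderiv ℝ φ x (X x) = 1)
    (τ : ℝ) :
    (Complex.I * τ) • ∫ x, oscillatoryFactor φ τ x • a x ∂μ =
      -∫ x, oscillatoryFactor φ τ x • transportOperator X (divergence X) a x ∂μ := by
  have osc_smul_contDiff := contDiff_oscillatoryFactor_smul ha hφ τ
  have operator_tsupport := tsupport_transportOperator_subset X (divergence X) a
  have operator_continuous : ContDiff ℝ 0 (transportOperator X (divergence X) a) :=
    contDiff_transportOperator (by simpa using ha) (fun x hx => (hX x hx).of_le zero_le_one)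
      fun x hx => contDiff_trace.contDiffAt.comp x ((hX x hx).fderiv_right (zero_add 1).le)
  have integrable_left : Integrable (fun x => oscillatoryFactor φ τ x • a x) μ :=
    osc_smul_contDiff.continuous.integrable_of_hasCompactSupport hac.smul_left
  have integrable_right :
      Integrable (fun x => oscillatoryFactor φ τ x • transportOperator X (divergence X) a x) μ :=
    (contDiff_oscillatoryFactor_smul operator_continuous (fun x hx =>
      (hφ x (operator_tsupport hx)).of_le zero_le_one) τ).continuous.integrable_of_hasCompactSupport
      (hac.mono' (subset_closure.trans operator_tsupport)).smul_left
  have integrable_smul_left :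
      Integrable (fun x => (Complex.I * τ) • oscillatoryFactor φ τ x • a x) μ :=
    integrable_left.smul _
  rw [← integral_smul, eq_neg_iff_add_eq_zero, ← integral_add integrable_smul_left integrable_right,
    ← integral_transportOperator_divergence_eq_zero μ osc_smul_contDiff hac.smul_left
      fun x hx => hX x (tsupport_smul_subset_right _ a hx)]
  refine integral_congr_ae (.of_forall fun x => ?_)
  exact (transportOperator_oscillatoryFactor_smul (ha.differentiable one_ne_zero)
    (fun x hx => (hφ x hx).differentiableAt one_ne_zero) hφX _ τ x).symm

end Oscillation

section Inversion

open EuclideanGeometry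

variable {E : Type*} [NormedAddCommGroup E] [InnerProductSpace ℝ E]

theorem inner_inversion_zero_one {x : E} (hx : x ≠ 0) : ⟪x, inversion 0 1 x⟫_ℝ = 1 := by
  have hx' : ‖x‖ ≠ 0 := norm_ne_zero_iff.2 hx
  simp only [inversion, vsub_eq_sub, sub_zero, vadd_eq_add, add_zero, dist_zero_right,
    real_inner_smul_right, real_inner_self_eq_norm_sq]
  field_simp

theorem norm_inversion_zero_one (x : E) : ‖inversion 0 1 x‖ = ‖x‖⁻¹ := by
  simpa using dist_inversion_center 0 x 1

/-- The derivative of the inversion in the unit sphere, as a function of the image point `y`; unlike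
the inversion, it is polynomial in `y`. -/
noncomputable def inversionDeriv (y : E) : E →L[ℝ] E :=
  ‖y‖ ^ 2 • ContinuousLinearMap.id ℝ E - ((2 : ℝ) • innerSL ℝ y).smulRight y

theorem contDiff_inversionDeriv {n : WithTop ℕ∞} : ContDiff ℝ n (inversionDeriv (E := E)) :=
  ((contDiff_norm_sq ℝ).smul contDiff_const).sub
    (((innerSL ℝ).contDiff.const_smul 2).smulRight contDiff_id)

theorem hasFDerivAt_inversion_zero_one {x : E} (hx : x ≠ 0) :
    HasFDerivAt (inversion 0 1) (inversionDeriv (inversion 0 1 x)) x := by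
  refine (hasFDerivAt_inversion hx).congr_fderiv ?_
  ext e
  have reflection_apply : (ℝ ∙ x)ᗮ.reflection e = e - (2 * ⟪x, e⟫_ℝ / ‖x‖ ^ 2) • x := by
    rw [Submodule.reflection_orthogonal_apply, Submodule.reflection_singleton_apply]
    simp only [ringHom_apply, neg_sub, sub_right_inj]
    module
  have inversion_eq : inversion 0 1 x = (‖x‖⁻¹ ^ 2) • x := by simp [inversion]
  rw [inversionDeriv, norm_inversion_zero_one, inversion_eq]
  simp only [dist_zero_right, one_div, inv_pow, sub_zero, smul_apply, ContinuousLinearEquiv.coe_coe,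
    LinearIsometryEquiv.coe_toContinuousLinearEquiv, reflection_apply, map_smul, sub_apply,
    ContinuousLinearMap.id_apply, ContinuousLinearMap.smulRight_apply, coe_innerSL_apply,
    smul_eq_mul]
  module

end Inversion

section Symbol

open EuclideanGeometry

variable {E F : Type*} [NormedAddCommGroup E] [InnerProductSpace ℝ E] [NormedAddCommGroup F]
  [NormedSpace ℝ F]

/-- The vector field `(v - G) / ‖v - G‖²`, along which a phase with gradient `v - G` has derivative
`1`. -/
noncomputable def reciprocalField (G : E → E) (v ξ : E) : E :=
  inversion 0 1 (v - G ξ)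

/-- The derivative of `reciprocalField G v` at `ξ`, as a function of `(ξ, reciprocalField G v ξ)`.
This encoding removes the parameter `v`. -/
noncomputable def reciprocalFieldDeriv (G : E → E) (p : E × E) : E →L[ℝ] E :=
  -(inversionDeriv p.2 ∘L fderiv ℝ G p.1)

/-- The transport operator of `reciprocalField G v`, acting on amplitudes of the form
`ξ ↦ P (ξ, reciprocalField G v ξ)` and written in terms of `P`. -/
noncomputable def symbolTransport (G : E → E) (P : E × E → F) : E × E → F :=
  transportOperator (fun p => (p.2, reciprocalFieldDeriv G p p.2))
    (fun p => LinearMap.trace ℝ E (reciprocalFieldDeriv G p)) P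

variable {G : E → E} {v ξ : E}

theorem contDiffAt_reciprocalField {n : ℕ∞} (hG : ContDiffAt ℝ n G ξ) (hv : v ≠ G ξ) :
    ContDiffAt ℝ n (reciprocalField G v) ξ :=
  contDiffAt_const.inversion contDiffAt_const (contDiffAt_const.sub hG) (sub_ne_zero.2 hv)

theorem hasFDerivAt_reciprocalField (hG : DifferentiableAt ℝ G ξ) (hv : v ≠ G ξ) :
    HasFDerivAt (reciprocalField G v) (reciprocalFieldDeriv G (ξ, reciprocalField G v ξ)) ξ := by
  refine ((hasFDerivAt_inversion_zero_one (sub_ne_zero.2 hv)).comp ξ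
    (hG.hasFDerivAt.const_sub v)).congr_fderiv ?_
  simp [reciprocalFieldDeriv, reciprocalField]

theorem contDiffAt_reciprocalFieldDeriv {n : WithTop ℕ∞} {p : E × E}
    (hG : ContDiffAt ℝ (n + 1) G p.1) : ContDiffAt ℝ n (reciprocalFieldDeriv G) p :=
  ((contDiff_inversionDeriv.contDiffAt.comp p contDiffAt_snd).clm_comp
    ((hG.fderiv_right le_rfl).comp p contDiffAt_fst)).neg

theorem norm_reciprocalField_le {m : ℝ} (hm : 0 < m) (hv : m ≤ ‖v - G ξ‖) :
    ‖reciprocalField G v ξ‖ ≤ m⁻¹ := by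
  rw [reciprocalField, norm_inversion_zero_one]
  gcongr

theorem transportOperator_comp_reciprocalField {P : E × E → F}
    (hP : DifferentiableAt ℝ P (ξ, reciprocalField G v ξ)) (hG : DifferentiableAt ℝ G ξ)
    (hv : v ≠ G ξ) :
    transportOperator (reciprocalField G v) (divergence (reciprocalField G v))
      (fun η => P (η, reciprocalField G v η)) ξ =
        symbolTransport G P (ξ, reciprocalField G v ξ) := by
  have hX := hasFDerivAt_reciprocalField hG hv
  have hPX : HasFDerivAt (fun η => P (η, reciprocalField G v η)) _ ξ :=
    hP.hasFDerivAt.comp ξ ((hasFDerivAt_id ξ).prodMk hX)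
  simp only [transportOperator, symbolTransport, divergence, hPX.fderiv, hX.fderiv,
    ContinuousLinearMap.comp_apply, ContinuousLinearMap.prod_apply, ContinuousLinearMap.id_apply]

theorem tsupport_symbolTransport_subset (G : E → E) (P : E × E → F) :
    tsupport (symbolTransport G P) ⊆ tsupport P :=
  tsupport_transportOperator_subset _ _ P

theorem contDiff_symbolTransport [FiniteDimensional ℝ E] {n : WithTop ℕ∞} {P : E × E → F}
    (hP : ContDiff ℝ (n + 1) P) (hG : ∀ p ∈ tsupport P, ContDiffAt ℝ (n + 1) G p.1) :
    ContDiff ℝ n (symbolTransport G P) := by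
  refine contDiff_transportOperator hP (fun p hp => ?_) fun p hp => ?_
  · exact contDiffAt_snd.prodMk
      ((contDiffAt_reciprocalFieldDeriv (hG p hp)).clm_apply contDiffAt_snd)
  · exact contDiff_trace.contDiffAt.comp p (contDiffAt_reciprocalFieldDeriv (hG p hp))

theorem tsupport_comp_reciprocalField_subset {Z : Type*} [Zero Z] {P : E × E → Z} {K : Set E}
    (hK : IsClosed K) (hPK : tsupport P ⊆ K ×ˢ Set.univ) (G : E → E) (v : E) :
    tsupport (fun ξ => P (ξ, reciprocalField G v ξ)) ⊆ K :=
  closure_minimal (fun _ hξ => (hPK (subset_closure hξ)).1) hK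

theorem contDiff_comp_reciprocalField {n : ℕ∞} {P : E × E → F} (hP : ContDiff ℝ n P) {K : Set E}
    (hK : IsClosed K) (hPK : tsupport P ⊆ K ×ˢ Set.univ) (hG : ∀ ξ ∈ K, ContDiffAt ℝ n G ξ)
    (hv : ∀ ξ ∈ K, v ≠ G ξ) : ContDiff ℝ n fun ξ => P (ξ, reciprocalField G v ξ) :=
  contDiff_of_forall_mem_tsupport fun ξ hξ =>
    have hξK := tsupport_comp_reciprocalField_subset hK hPK G v hξ
    hP.contDiffAt.comp ξ (contDiffAt_id.prodMk (contDiffAt_reciprocalField (hG ξ hξK) (hv ξ hξK)))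

end Symbol

section Gradient

variable {E : Type*} [NormedAddCommGroup E] [InnerProductSpace ℝ E] [CompleteSpace E] {w : E → ℝ}
  {v ξ : E}

theorem contDiffAt_gradient {n : WithTop ℕ∞} (hw : ContDiffAt ℝ (n + 1) w ξ) :
    ContDiffAt ℝ n (∇ w) ξ :=
  (InnerProductSpace.toDual ℝ E).symm.contDiff.contDiffAt.comp ξ (hw.fderiv_right le_rfl)

theorem fderiv_inner_sub_apply (hw : DifferentiableAt ℝ w ξ) (v e : E) :
    fderiv ℝ (fun η => ⟪v, η⟫_ℝ - w η) ξ e = ⟪v - ∇ w ξ, e⟫_ℝ := by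
  have h : HasFDerivAt (fun η => ⟪v, η⟫_ℝ - w η) (innerSL ℝ v - fderiv ℝ w ξ) ξ :=
    (innerSL ℝ v).hasFDerivAt.sub hw.hasFDerivAt
  rw [h.fderiv, sub_apply, innerSL_apply_apply, inner_sub_left, inner_gradient_left]

theorem fderiv_inner_sub_apply_reciprocalField (hw : DifferentiableAt ℝ w ξ) (hv : v ≠ ∇ w ξ) :
    fderiv ℝ (fun η => ⟪v, η⟫_ℝ - w η) ξ (reciprocalField (∇ w) v ξ) = 1 :=
  (fderiv_inner_sub_apply hw v _).trans (inner_inversion_zero_one (sub_ne_zero.2 hv))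

end Gradient

section Nonstationary

variable {E F : Type*} [NormedAddCommGroup E] [InnerProductSpace ℝ E] [FiniteDimensional ℝ E]
  [MeasurableSpace E] [NormedAddCommGroup F] [NormedSpace ℂ F]

/-- The oscillatory integral with phase `ξ ↦ ⟪v, ξ⟫ - w ξ`, frequency `τ` and amplitude
`ξ ↦ P (ξ, reciprocalField (∇ w) v ξ)`. -/
noncomputable def symbolIntegral (μ : Measure E) (w : E → ℝ) (P : E × E → F) (v : E) (τ : ℝ) : F :=
  ∫ ξ, oscillatoryFactor (fun η => ⟪v, η⟫_ℝ - w η) τ ξ • P (ξ, reciprocalField (∇ w) v ξ) ∂μ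

variable (μ : Measure E) {w : E → ℝ} {K : Set E} {P : E × E → F}

theorem exists_norm_symbolIntegral_le [IsFiniteMeasureOnCompacts μ] (w : E → ℝ) (hK : IsCompact K)
    (hP : Continuous P) (hPK : tsupport P ⊆ K ×ˢ Set.univ) {m : ℝ} (hm : 0 < m) :
    ∃ C, ∀ v, (∀ ξ ∈ K, m ≤ ‖v - ∇ w ξ‖) → ∀ τ, ‖symbolIntegral μ w P v τ‖ ≤ C := by
  obtain ⟨B, hB⟩ := (hK.prod (isCompact_closedBall (0 : E) m⁻¹)).exists_bound_of_continuousOn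
    hP.continuousOn
  refine ⟨B * μ.real K, fun v hv τ => ?_⟩
  have integral_eq : symbolIntegral μ w P v τ =
      ∫ ξ in K, oscillatoryFactor (fun η => ⟪v, η⟫_ℝ - w η) τ ξ •
        P (ξ, reciprocalField (∇ w) v ξ) ∂μ :=
    (setIntegral_eq_integral_of_forall_compl_eq_zero fun ξ hξ => by
      rw [image_eq_zero_of_notMem_tsupport fun h => hξ (hPK h).1, smul_zero]).symm
  rw [integral_eq]
  refine norm_setIntegral_le_of_norm_le_const hK.measure_lt_top fun ξ hξ => ?_
  rw [norm_smul, norm_oscillatoryFactor, one_mul]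
  exact hB _ ⟨hξ, mem_closedBall_zero_iff.2 (norm_reciprocalField_le hm (hv ξ hξ))⟩

variable [BorelSpace E] [μ.IsAddHaarMeasure]

theorem smul_symbolIntegral (hK : IsCompact K) (hw : ∀ ξ ∈ K, ContDiffAt ℝ 2 w ξ)
    (hP : ContDiff ℝ 1 P) (hPK : tsupport P ⊆ K ×ˢ Set.univ) {v : E} (hv : ∀ ξ ∈ K, v ≠ ∇ w ξ)
    (τ : ℝ) :
    (Complex.I * τ) • symbolIntegral μ w P v τ =
      -symbolIntegral μ w (symbolTransport (∇ w) P) v τ := by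
  let a ξ := P (ξ, reciprocalField (∇ w) v ξ)
  have haK : tsupport a ⊆ K := tsupport_comp_reciprocalField_subset hK.isClosed hPK _ v
  have hG ξ (hξ : ξ ∈ K) : ContDiffAt ℝ 1 (∇ w) ξ :=
    contDiffAt_gradient ((hw ξ hξ).of_le one_add_one_eq_two.le)
  have hw' ξ (hξ : ξ ∈ K) : DifferentiableAt ℝ w ξ := (hw ξ hξ).differentiableAt two_ne_zero
  have ha : ContDiff ℝ 1 a :=
    contDiff_comp_reciprocalField (n := 1) hP hK.isClosed hPK hG hv
  have transport_eq ξ : transportOperator (reciprocalField (∇ w) v)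
      (divergence (reciprocalField (∇ w) v)) a ξ =
        symbolTransport (∇ w) P (ξ, reciprocalField (∇ w) v ξ) := by
    by_cases hξ : ξ ∈ K
    · exact transportOperator_comp_reciprocalField (hP.differentiable one_ne_zero _)
        ((hG ξ hξ).differentiableAt one_ne_zero) (hv ξ hξ)
    · rw [image_eq_zero_of_notMem_tsupport fun h =>
          hξ (haK (tsupport_transportOperator_subset _ _ _ h)),
        image_eq_zero_of_notMem_tsupport fun h =>
          hξ (hPK (tsupport_symbolTransport_subset _ P h)).1]
  simp only [symbolIntegral, ← transport_eq]
  exact smul_integral_oscillatoryFactor_smul μ ha (hK.of_isClosed_subset (isClosed_tsupport a) haK)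
    (fun ξ hξ => (innerSL ℝ v).contDiff.contDiffAt.sub ((hw ξ (haK hξ)).of_le one_le_two))
    (fun ξ hξ => contDiffAt_reciprocalField (n := 1) (hG ξ (haK hξ)) (hv ξ (haK hξ)))
    (fun ξ hξ => fderiv_inner_sub_apply_reciprocalField (hw' ξ (haK hξ)) (hv ξ (haK hξ))) τ

theorem exists_abs_pow_mul_norm_symbolIntegral_le {m : ℝ} (hm : 0 < m) (hK : IsCompact K)
    {n : ℕ} (hw : ∀ ξ ∈ K, ContDiffAt ℝ (n + 1) w ξ) (hP : ContDiff ℝ n P)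
    (hPK : tsupport P ⊆ K ×ˢ Set.univ) :
    ∃ C, ∀ v, (∀ ξ ∈ K, m ≤ ‖v - ∇ w ξ‖) → ∀ τ : ℝ,
      |τ| ^ n * ‖symbolIntegral μ w P v τ‖ ≤ C := by
  induction n generalizing P with
  | zero => simpa using exists_norm_symbolIntegral_le μ w hK hP.continuous hPK hm
  | succ n ih =>
    push_cast at hw hP
    have transport_contDiff : ContDiff ℝ n (symbolTransport (∇ w) P) :=
      contDiff_symbolTransport hP fun p hp => contDiffAt_gradient (hw p.1 (hPK hp).1)
    obtain ⟨C, hC⟩ := ih (fun ξ hξ => (hw ξ hξ).of_le le_self_add) transport_contDiff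
      ((tsupport_symbolTransport_subset _ P).trans hPK)
    refine ⟨C, fun v hv τ => ?_⟩
    have hw₂ ξ (hξ : ξ ∈ K) : ContDiffAt ℝ 2 w ξ :=
      (hw ξ hξ).of_le (by rw [← one_add_one_eq_two]; gcongr; exact le_add_self)
    have hv_ne ξ (hξ : ξ ∈ K) : v ≠ ∇ w ξ :=
      sub_ne_zero.1 (norm_pos_iff.1 (hm.trans_le (hv ξ hξ)))
    have norm_step := congr(‖$(smul_symbolIntegral μ hK hw₂ (hP.of_le le_add_self) hPK hv_ne τ)‖)
    rw [norm_smul, norm_neg, norm_mul, Complex.norm_I, one_mul, Complex.norm_real,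
      Real.norm_eq_abs] at norm_step
    rw [pow_succ, mul_assoc, norm_step]
    exact hC v hv τ

theorem exists_abs_pow_mul_norm_integral_oscillatoryFactor_le {m : ℝ} (hm : 0 < m) {a : E → F}
    {n : ℕ} (ha : ContDiff ℝ n a) (hac : HasCompactSupport a)
    (hw : ∀ ξ ∈ tsupport a, ContDiffAt ℝ (n + 1) w ξ) :
    ∃ C, ∀ v, (∀ ξ ∈ tsupport a, m ≤ ‖v - ∇ w ξ‖) → ∀ τ : ℝ,
      |τ| ^ n * ‖∫ ξ, oscillatoryFactor (fun η => ⟪v, η⟫_ℝ - w η) τ ξ • a ξ ∂μ‖ ≤ C :=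
  exists_abs_pow_mul_norm_symbolIntegral_le μ hm hac hw (ha.comp contDiff_fst)
    fun _ hp => ⟨tsupport_comp_subset_preimage a continuous_fst hp, trivial⟩

end Nonstationary

section Coordinates

variable {ι F : Type*} [Fintype ι] [NormedAddCommGroup F] [NormedSpace ℂ F]

/-- The functional `x ↦ ∑ i, g i * x i` on `ι → ℝ`, in whose form gradients in coordinates are
stated; `ι → ℝ` has no inner product to represent them by vectors. -/
noncomputable def coordFunctional (g : ι → ℝ) : (ι → ℝ) →L[ℝ] ℝ :=
  ∑ i, g i • ContinuousLinearMap.proj i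

theorem hasGradientAt_comp_ofLp {w : (ι → ℝ) → ℝ} {g : ι → ℝ} {x : EuclideanSpace ℝ ι}
    (hw : HasFDerivAt w (coordFunctional g) x.ofLp) :
    HasGradientAt (fun y : EuclideanSpace ℝ ι => w y.ofLp) (WithLp.toLp 2 g) x := by
  rw [hasGradientAt_iff_hasFDerivAt]
  refine (hw.comp x (PiLp.continuousLinearEquiv 2 ℝ fun _ : ι => ℝ).hasFDerivAt).congr_fderiv ?_
  ext e
  simp [coordFunctional, PiLp.inner_apply, mul_comm]

theorem exists_abs_pow_mul_norm_integral_pi_le {m : ℝ} (hm : 0 < m) {a : (ι → ℝ) → F} {n : ℕ}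
    (ha : ContDiff ℝ n a) (hac : HasCompactSupport a) {w : (ι → ℝ) → ℝ}
    (hw : ∀ ξ ∈ tsupport a, ContDiffAt ℝ (n + 1) w ξ) {G : (ι → ℝ) → ι → ℝ}
    (hG : ∀ ξ ∈ tsupport a, HasFDerivAt w (coordFunctional (G ξ)) ξ) :
    ∃ C, ∀ v : ι → ℝ, (∀ ξ ∈ tsupport a, m ≤ √(∑ i, (v i - G ξ i) ^ 2)) → ∀ τ : ℝ,
      |τ| ^ n * ‖∫ ξ, oscillatoryFactor (fun η => (∑ i, v i * η i) - w η) τ ξ • a ξ‖ ≤ C := by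
  have tsupport_comp {x : EuclideanSpace ℝ ι} (hx : x ∈ tsupport fun y : EuclideanSpace ℝ ι =>
      a y.ofLp) : x.ofLp ∈ tsupport a :=
    tsupport_comp_subset_preimage a (PiLp.continuous_ofLp 2 _) hx
  obtain ⟨C, hC⟩ := exists_abs_pow_mul_norm_integral_oscillatoryFactor_le volume hm
    (a := fun x : EuclideanSpace ℝ ι => a x.ofLp) (w := fun x : EuclideanSpace ℝ ι => w x.ofLp)
    (ha.comp PiLp.contDiff_ofLp)
    (hac.comp_homeomorph (PiLp.continuousLinearEquiv 2 ℝ fun _ : ι => ℝ).toHomeomorph)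
    fun x hx => (hw _ (tsupport_comp hx)).comp x PiLp.contDiff_ofLp.contDiffAt
  refine ⟨C, fun v hv τ => ?_⟩
  rw [← (PiLp.volume_preserving_ofLp ι).integral_comp
    (MeasurableEquiv.toLp 2 (ι → ℝ)).symm.measurableEmbedding]
  have phase_eq (x : EuclideanSpace ℝ ι) : ⟪WithLp.toLp 2 v, x⟫_ℝ = ∑ i, v i * x i := by
    simp [PiLp.inner_apply, mul_comm]
  have norm_eq (g : ι → ℝ) : ‖WithLp.toLp 2 v - WithLp.toLp 2 g‖ = √(∑ i, (v i - g i) ^ 2) := by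
    simp [EuclideanSpace.norm_eq]
  simpa only [oscillatoryFactor, phase_eq] using hC (WithLp.toLp 2 v) (fun x hx => by
    rw [(hasGradientAt_comp_ofLp (hG _ (tsupport_comp hx))).gradient, norm_eq]
    exact hv _ (tsupport_comp hx)) τ

end Coordinates

section SineSymbol

variable {ι : Type*} [Fintype ι]

/-- The Fourier symbol `∑ i, sin² (ξ i / 2)` of the discrete Laplacian, up to the factor `-4`. -/
noncomputable def sineSymbol (ξ : ι → ℝ) : ℝ :=
  ∑ i, sin (ξ i / 2) ^ 2

theorem contDiff_sineSymbol {n : WithTop ℕ∞} : ContDiff ℝ n (sineSymbol (ι := ι)) := by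
  unfold sineSymbol
  fun_prop

theorem hasDerivAt_sin_half_sq (t : ℝ) : HasDerivAt (fun x => sin (x / 2) ^ 2) (sin t / 2) t := by
  refine (((hasDerivAt_id' t).div_const 2).sin.pow 2).congr_deriv ?_
  rw [← mul_div_cancel₀ t two_ne_zero, sin_two_mul]
  simp only [Nat.cast_ofNat, ne_eq, OfNat.ofNat_ne_zero, not_false_eq_true, mul_div_cancel_left₀,
    Nat.add_one_sub_one, pow_one, one_div]
  ring

theorem hasFDerivAt_sineSymbol (ξ : ι → ℝ) :
    HasFDerivAt sineSymbol (coordFunctional fun i => sin (ξ i) / 2) ξ := by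
  refine HasFDerivAt.fun_sum fun i _ => ?_
  exact (hasDerivAt_sin_half_sq (ξ i)).comp_hasFDerivAt ξ
    (ContinuousLinearMap.proj (R := ℝ) (φ := fun _ : ι => ℝ) i).hasFDerivAt

theorem hasFDerivAt_sineSymbol_rpow {ξ : ι → ℝ} (hξ : sineSymbol ξ ≠ 0) (α : ℝ) :
    HasFDerivAt (fun η => sineSymbol η ^ (α / 2))
      (coordFunctional fun i => α / 4 * sineSymbol ξ ^ ((α - 2) / 2) * sin (ξ i)) ξ := by
  refine ((hasFDerivAt_sineSymbol ξ).rpow_const (p := α / 2) (Or.inl hξ)).congr_fderiv ?_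
  rw [coordFunctional, coordFunctional, Finset.smul_sum]
  refine Finset.sum_congr rfl fun i _ => ?_
  rw [smul_smul, sub_div, div_self two_ne_zero]
  congr 1
  ring

end SineSymbol

theorem stmt11_general {ι F : Type*} [Fintype ι] [NormedAddCommGroup F] [NormedSpace ℂ F] (α : ℝ)
    (s : (ι → ℝ) → ℝ) (hs : ∀ ξ, s ξ = ∑ i, Real.sin (ξ i / 2) ^ 2)
    (w : (ι → ℝ) → ℝ) (hw : ∀ ξ, w ξ = s ξ ^ (α / 2))
    (G : (ι → ℝ) → ι → ℝ) (hG : ∀ ξ i, G ξ i = α / 4 * s ξ ^ ((α - 2) / 2) * Real.sin (ξ i))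
    (n : ℕ) (ζ : (ι → ℝ) → F) (hζ : ContDiff ℝ n ζ) (hζc : HasCompactSupport ζ)
    (hsupp : ∀ ξ ∈ tsupport ζ, 0 < s ξ) (m : ℝ) (hm : 0 < m) :
    ∃ C > 0, ∀ v : ι → ℝ, (∀ ξ ∈ tsupport ζ, m ≤ √(∑ i, (v i - G ξ i) ^ 2)) →
      ∀ τ : ℝ, τ ≠ 0 →
        ‖∫ ξ : ι → ℝ,
            Complex.exp (Complex.I * (τ : ℂ) * (((∑ i, v i * ξ i) - w ξ : ℝ) : ℂ)) • ζ ξ‖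
          ≤ C * |τ| ^ (-(n : ℝ)) := by
  obtain rfl : s = sineSymbol := funext hs
  obtain rfl : w = fun ξ => sineSymbol ξ ^ (α / 2) := funext hw
  obtain rfl : G = fun ξ i => α / 4 * sineSymbol ξ ^ ((α - 2) / 2) * sin (ξ i) :=
    funext fun ξ => funext (hG ξ)
  obtain ⟨C, hC⟩ := exists_abs_pow_mul_norm_integral_pi_le hm hζ hζc
    (fun ξ hξ => contDiff_sineSymbol.contDiffAt.rpow_const_of_ne (p := α / 2) (hsupp ξ hξ).ne')
    fun ξ hξ => hasFDerivAt_sineSymbol_rpow (hsupp ξ hξ).ne' α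
  refine ⟨max C 1, by positivity, fun v hv τ hτ => ?_⟩
  rw [rpow_neg (abs_nonneg τ), rpow_natCast, ← div_eq_mul_inv,
    le_div_iff₀' (pow_pos (abs_pos.2 hτ) n)]
  exact (hC v hv τ).trans (le_max_left C 1)

/-- Non-stationary phase bound. For `d ≥ 1`, `1 < α < 2`, a smooth
compactly supported `ζ` whose support avoids `{s = 0}`, and `m > 0`: for every `n ∈ ℕ`
there is `C > 0` such that for every `v` staying at Euclidean distance `≥ m` from the
gradient `∇w_α` on the support of `ζ`, and every `τ ≠ 0`,
`|∫ e^{iτ(v·ξ − w_α(ξ))} ζ(ξ) dξ| ≤ C·|τ|^(−n)`. -/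
theorem stmt11 (d : ℕ) (hd : 1 ≤ d) (α : ℝ) (hα1 : 1 < α) (hα2 : α < 2)
    (s : (Fin d → ℝ) → ℝ) (hs : ∀ ξ, s ξ = ∑ i, Real.sin (ξ i / 2) ^ 2)
    (w : (Fin d → ℝ) → ℝ) (hw : ∀ ξ, w ξ = s ξ ^ (α / 2))
    (G : (Fin d → ℝ) → Fin d → ℝ)
    (hG : ∀ ξ i, G ξ i = α / 4 * s ξ ^ ((α - 2) / 2) * Real.sin (ξ i))
    (ζ : (Fin d → ℝ) → ℂ) (hζ : ContDiff ℝ (⊤ : ℕ∞) ζ) (hζc : HasCompactSupport ζ)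
    (hsupp : ∀ ξ ∈ tsupport ζ, 0 < s ξ)
    (m : ℝ) (hm : 0 < m) (n : ℕ) :
    ∃ C > 0, ∀ v : Fin d → ℝ,
      (∀ ξ ∈ tsupport ζ, m ≤ Real.sqrt (∑ i, (v i - G ξ i) ^ 2)) →
      ∀ τ : ℝ, τ ≠ 0 →
        ‖∫ ξ : Fin d → ℝ,
            Complex.exp (Complex.I * (τ : ℂ) * (((∑ i, v i * ξ i) - w ξ : ℝ) : ℂ)) * ζ ξ‖
          ≤ C * |τ| ^ (-(n : ℝ)) := by
  simpa only [smul_eq_mul] using stmt11_general α s hs w hw G hG n ζ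
    (hζ.of_le (mod_cast le_top)) hζc hsupp m hm
end
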